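/- arXiv:1912.04815 — 2 statements merged into one kernel-verified Lean document; each statement's English description precedes it below -/
import Mathlib

section
/- Let n ≥ 1, let P be an n×n nonnegative row sub-stochastic matrix, and let w ∈ ℝ^n with w ≥ 0. For c ∈ ℝ^n, let x̲(c) and x̄(c) denote respectively the minimal and maximal equilibrium of the network (P, w) with exogenous flow c. Then both maps c ↦ x̲(c) and c ↦ x̄(c) are monotone nondecreasing: if c₁ ≤ c₂ entrywise then x̲(c₁) ≤ x̲(c₂) and x̄(c₁) ≤ x̄(c₂) entrywise. -/
open Matrix Finset Filter Topology

/-- The saturation function `S_0^w`. -/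
def sat {n : ℕ} (w y : Fin n → ℝ) : Fin n → ℝ := fun i => min (max (y i) 0) (w i)

/-- `x` is an equilibrium of the network `(P, w)` with exogenous flow `c`. -/
def IsEquil {n : ℕ} (P : Matrix (Fin n) (Fin n) ℝ) (w c x : Fin n → ℝ) : Prop :=
  x = sat w (Pᵀ.mulVec x + c)

/-- Knaster–Tarski on an order interval of a conditionally complete lattice. -/
theorem Monotone.exists_fixedPoint_mem_Icc {α : Type*} [ConditionallyCompleteLattice α]
    {f : α → α} (hf : Monotone f) {a b : α} (hab : a ≤ b) (ha : a ≤ f a) (hb : f b ≤ b) :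
    ∃ x ∈ Set.Icc a b, x = f x := by
  set S : Set α := {x | x ∈ Set.Icc a b ∧ x ≤ f x}
  have haS : a ∈ S := ⟨⟨le_rfl, hab⟩, ha⟩
  have hbdd : BddAbove S := ⟨b, fun x hx => hx.1.2⟩
  have hmem : sSup S ∈ Set.Icc a b :=
    ⟨le_csSup hbdd haS, csSup_le ⟨a, haS⟩ fun x hx => hx.1.2⟩
  have hle : sSup S ≤ f (sSup S) :=
    csSup_le ⟨a, haS⟩ fun x hx => hx.2.trans (hf (le_csSup hbdd hx))
  have hfS : f (sSup S) ∈ S :=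
    ⟨⟨hmem.1.trans hle, (hf hmem.2).trans hb⟩, hf hle⟩
  exact ⟨sSup S, hmem, le_antisymm hle (le_csSup hbdd hfS)⟩

theorem sat_monotone {n : ℕ} (w : Fin n → ℝ) : Monotone (sat w) :=
  fun _ _ h i => min_le_min_right _ (max_le_max_right _ (h i))

theorem sat_nonneg {n : ℕ} {w : Fin n → ℝ} (hw : 0 ≤ w) (y : Fin n → ℝ) : 0 ≤ sat w y :=
  fun i => le_min (le_max_right _ _) (hw i)

theorem sat_le {n : ℕ} (w y : Fin n → ℝ) : sat w y ≤ w :=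
  fun _ => min_le_right _ _

theorem sat_mulVec_add_monotone {n : ℕ} {P : Matrix (Fin n) (Fin n) ℝ}
    (hP : ∀ i j, 0 ≤ P i j) (w c : Fin n → ℝ) :
    Monotone fun x => sat w (Pᵀ.mulVec x + c) := by
  intro x y h
  have hmul : Pᵀ.mulVec x ≤ Pᵀ.mulVec y := fun i => by
    simp only [mulVec, dotProduct, transpose_apply]
    exact Finset.sum_le_sum fun j _ => mul_le_mul_of_nonneg_left (h j) (hP j i)
  exact sat_monotone w (add_le_add_left hmul c)

/-- the minimal and maximal equilibria depend monotonically on the exogenous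
flow `c`: if `c₁ ≤ c₂` then the minimal (resp. maximal) equilibrium for `c₁` is `≤` the
minimal (resp. maximal) equilibrium for `c₂`. -/
theorem minimal_maximal_equilibria_monotone_in_c
    {n : ℕ} (hn : 1 ≤ n) (P : Matrix (Fin n) (Fin n) ℝ)
    (hP : ∀ i j, 0 ≤ P i j) (hsub : ∀ i, ∑ j, P i j ≤ 1)
    (w : Fin n → ℝ) (hw : 0 ≤ w)
    (c₁ c₂ : Fin n → ℝ) (hc : c₁ ≤ c₂)
    (xlo₁ xlo₂ xhi₁ xhi₂ : Fin n → ℝ)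
    (hlo₁ : IsEquil P w c₁ xlo₁ ∧ ∀ y, IsEquil P w c₁ y → xlo₁ ≤ y)
    (hlo₂ : IsEquil P w c₂ xlo₂ ∧ ∀ y, IsEquil P w c₂ y → xlo₂ ≤ y)
    (hhi₁ : IsEquil P w c₁ xhi₁ ∧ ∀ y, IsEquil P w c₁ y → y ≤ xhi₁)
    (hhi₂ : IsEquil P w c₂ xhi₂ ∧ ∀ y, IsEquil P w c₂ y → y ≤ xhi₂) :
    xlo₁ ≤ xlo₂ ∧ xhi₁ ≤ xhi₂ := by
  have hmono (x : Fin n → ℝ) : sat w (Pᵀ.mulVec x + c₁) ≤ sat w (Pᵀ.mulVec x + c₂) :=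
    sat_monotone w (add_le_add_right hc _)
  constructor
  · have hpos : 0 ≤ xlo₂ := (sat_nonneg hw _).trans_eq hlo₂.1.symm
    obtain ⟨x, hx, hfix⟩ := (sat_mulVec_add_monotone hP w c₁).exists_fixedPoint_mem_Icc
      hpos (sat_nonneg hw _) ((hmono xlo₂).trans_eq hlo₂.1.symm)
    exact (hlo₁.2 x hfix).trans hx.2
  · have hle : xhi₁ ≤ w := hhi₁.1.trans_le (sat_le w _)
    obtain ⟨x, hx, hfix⟩ := (sat_mulVec_add_monotone hP w c₂).exists_fixedPoint_mem_Icc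
      hle (hhi₁.1.trans_le (hmono xhi₁)) (sat_le w _)
    exact hx.1.trans (hhi₂.2 x hfix)
end

section
/- Let n ≥ 1, let P be an n×n nonnegative row sub-stochastic matrix, let w ∈ ℝ^n with w ≥ 0, and let c ∈ ℝ^n. Let S ⊆ {1,…,n} be an irreducible trapping set of G_P whose restricted matrix P_{SS} is row-stochastic (Σ_{j∈S} P_{ij} = 1 for all i ∈ S). Let x be an equilibrium of (P, w) with exogenous flow c, let d ∈ ℝ^S be defined by d_j = c_j + Σ_{i∉S} P_{ij} x_i for j ∈ S, and assume Σ_{j∈S} d_j = 0. Let π ∈ ℝ^S be the invariant probability vector of P_{SS} (π = (P_{SS})ᵀπ, Σ_{j∈S} π_j = 1, π_j > 0), and suppose ν ∈ ℝ^S satisfies ν = (P_{SS})ᵀν + d. Then: the restriction to S is non-unique across equilibria (i.e., there exist equilibria x, y with x_j ≠ y_j for some j ∈ S) if and only if min_{i∈S} (ν_i / π_i) + min_{i∈S} ((w_i − ν_i) / π_i) > 0; moreover, in that case, for every equilibrium y there exists α with −min_{i∈S} (ν_i / π_i) ≤ α ≤ min_{i∈S} ((w_i − ν_i) / π_i) such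 that y_j = ν_j + α π_j for all j ∈ S. -/
open Matrix Finset Filter Topology

/-- A trapping set of `G_P`: a nonempty set of nodes with no links pointing out of it. -/
def TrapSet {n : ℕ} (P : Matrix (Fin n) (Fin n) ℝ) (S : Finset (Fin n)) : Prop :=
  S.Nonempty ∧ ∀ i ∈ S, ∀ j ∉ S, P i j = 0

/-- An irreducible trapping set: a trapping set not strictly containing any trapping set. -/
def IrredTrapSet {n : ℕ} (P : Matrix (Fin n) (Fin n) ℝ) (S : Finset (Fin n)) : Prop :=
  TrapSet P S ∧ ∀ S', TrapSet P S' → S' ⊆ S → S' = S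

theorem abs_clamp_sub_clamp_le (a b w : ℝ) :
    |min (max a 0) w - min (max b 0) w| ≤ |a - b| :=
  (abs_inf_sub_inf_le_abs _ _ _).trans (abs_sup_sub_sup_le_abs _ _ _)

theorem clamp_eq_self_of_abs_sub_le {a b w : ℝ} (hw : 0 ≤ w) (hab : a ≠ b)
    (h : |a - b| ≤ |min (max a 0) w - min (max b 0) w|) : min (max a 0) w = a := by
  grind

section Network

variable {n : ℕ} {P : Matrix (Fin n) (Fin n) ℝ} {S : Finset (Fin n)} {w c x y : Fin n → ℝ}

theorem IsEquil.apply (h : IsEquil P w c x) (j : Fin n) :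
    x j = min (max (∑ i, P i j * x i + c j) 0) (w j) :=
  congrFun h j

theorem isEquil_of_apply (h : ∀ j, x j = min (max (∑ i, P i j * x i + c j) 0) (w j)) :
    IsEquil P w c x :=
  funext h

theorem abs_sum_mul_sub_sum_mul_le (hP : ∀ i j, 0 ≤ P i j) (j : Fin n) :
    |(∑ i, P i j * x i + c j) - (∑ i, P i j * y i + c j)| ≤ ∑ i, P i j * |x i - y i| := by
  rw [add_sub_add_right_eq_sub, ← Finset.sum_sub_distrib]
  refine (Finset.abs_sum_le_sum_abs _ _).trans_eq (Finset.sum_congr rfl fun i _ => ?_)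
  rw [← mul_sub, abs_mul, abs_of_nonneg (hP i j)]

theorem IsEquil.abs_sub_le (hP : ∀ i j, 0 ≤ P i j) (hx : IsEquil P w c x)
    (hy : IsEquil P w c y) (j : Fin n) : |x j - y j| ≤ ∑ i, P i j * |x i - y i| := by
  refine le_trans ?_ (abs_sum_mul_sub_sum_mul_le (c := c) hP j)
  conv_lhs => rw [hx.apply j, hy.apply j]
  exact abs_clamp_sub_clamp_le _ _ _

/-- The absolute difference of two equilibria is an invariant vector of `P`. -/
theorem IsEquil.abs_sub_eq (hP : ∀ i j, 0 ≤ P i j) (hsub : ∀ i, ∑ j, P i j ≤ 1)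
    (hx : IsEquil P w c x) (hy : IsEquil P w c y) (j : Fin n) :
    |x j - y j| = ∑ i, P i j * |x i - y i| := by
  have hle := fun j (_ : j ∈ Finset.univ) => hx.abs_sub_le hP hy j
  refine (Finset.sum_eq_sum_iff_of_le hle).1 (le_antisymm (Finset.sum_le_sum hle) ?_) j
    (Finset.mem_univ j)
  rw [Finset.sum_comm]
  refine Finset.sum_le_sum fun i _ => ?_
  rw [← Finset.sum_mul]
  exact mul_le_of_le_one_left (abs_nonneg _) (hsub i)

/-- Two equilibria send the same flow from outside a stochastic block into that block. -/
theorem IsEquil.mul_abs_sub_eq_zero (hP : ∀ i j, 0 ≤ P i j) (hsub : ∀ i, ∑ j, P i j ≤ 1)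
    (hstoc : ∀ i ∈ S, ∑ j ∈ S, P i j = 1) (hx : IsEquil P w c x) (hy : IsEquil P w c y)
    {i j : Fin n} (hi : i ∈ Sᶜ) (hj : j ∈ S) : P i j * |x i - y i| = 0 := by
  have hsum : ∑ j ∈ S, |x j - y j| =
      ∑ i ∈ S, |x i - y i| + ∑ j ∈ S, ∑ i ∈ Sᶜ, P i j * |x i - y i| := by
    have hin : ∑ j ∈ S, ∑ i ∈ S, P i j * |x i - y i| = ∑ i ∈ S, |x i - y i| := by
      rw [Finset.sum_comm]
      refine Finset.sum_congr rfl fun i hi => ?_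
      rw [← Finset.sum_mul, hstoc i hi, one_mul]
    conv_rhs => rw [← hin, ← Finset.sum_add_distrib]
    refine Finset.sum_congr rfl fun j _ => ?_
    rw [Finset.sum_add_sum_compl]
    exact hx.abs_sub_eq hP hsub hy j
  have hnn : ∀ i j, 0 ≤ P i j * |x i - y i| := fun i j => mul_nonneg (hP i j) (abs_nonneg _)
  have h0 : ∑ j ∈ S, ∑ i ∈ Sᶜ, P i j * |x i - y i| = 0 := by linarith
  rw [Finset.sum_eq_zero_iff_of_nonneg
    fun j _ => Finset.sum_nonneg fun i _ => hnn i j] at h0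
  exact (Finset.sum_eq_zero_iff_of_nonneg fun i _ => hnn i j).1 (h0 j hj) i hi

theorem IsEquil.sum_compl_eq (hP : ∀ i j, 0 ≤ P i j) (hsub : ∀ i, ∑ j, P i j ≤ 1)
    (hstoc : ∀ i ∈ S, ∑ j ∈ S, P i j = 1) (hx : IsEquil P w c x) (hy : IsEquil P w c y)
    {j : Fin n} (hj : j ∈ S) : ∑ i ∈ Sᶜ, P i j * x i = ∑ i ∈ Sᶜ, P i j * y i := by
  refine Finset.sum_congr rfl fun i hi => ?_
  rcases mul_eq_zero.1 (hx.mul_abs_sub_eq_zero hP hsub hstoc hy hi hj) with h | h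
  · simp [h]
  · rw [sub_eq_zero.1 (abs_eq_zero.1 h)]

/-- A nonnegative invariant vector of an irreducible block that vanishes somewhere vanishes
everywhere. -/
theorem IrredTrapSet.eq_zero_of_invariant (hP : ∀ i j, 0 ≤ P i j) (hS : IrredTrapSet P S)
    {u : Fin n → ℝ} (hu : ∀ j ∈ S, 0 ≤ u j) (hinv : ∀ j ∈ S, u j = ∑ i ∈ S, P i j * u i)
    {k : Fin n} (hk : k ∈ S) (huk : u k = 0) : ∀ j ∈ S, u j = 0 := by
  by_contra! hne
  obtain ⟨l, hl, hul⟩ := hne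
  have htrap : TrapSet P (S.filter fun j => u j ≠ 0) := by
    refine ⟨⟨l, by simp [hl, hul]⟩, fun i hi j hj => ?_⟩
    rw [Finset.mem_filter] at hi hj
    by_cases hjS : j ∈ S
    · have huj : u j = 0 := by
        by_contra h
        exact hj ⟨hjS, h⟩
      have h0 := hinv j hjS
      rw [huj, eq_comm,
        Finset.sum_eq_zero_iff_of_nonneg fun i hi => mul_nonneg (hP i j) (hu i hi)] at h0
      exact (mul_eq_zero.1 (h0 i hi.1)).resolve_right hi.2
    · exact hS.1.2 i hi.1 j hjS
  have hmem := hk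
  rw [← hS.2 _ htrap (Finset.filter_subset _ _), Finset.mem_filter] at hmem
  exact hmem.2 huk

/-- The invariant vectors of an irreducible block are the multiples of a positive one. -/
theorem IrredTrapSet.exists_eq_mul_of_invariant (hP : ∀ i j, 0 ≤ P i j) (hS : IrredTrapSet P S)
    {π v : Fin n → ℝ} (hπ : ∀ j ∈ S, π j = ∑ i ∈ S, P i j * π i) (hπpos : ∀ j ∈ S, 0 < π j)
    (hv : ∀ j ∈ S, v j = ∑ i ∈ S, P i j * v i) : ∃ α : ℝ, ∀ j ∈ S, v j = α * π j := by
  obtain ⟨k, hk, hmin⟩ := S.exists_min_image (fun i => v i / π i) hS.1.1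
  refine ⟨v k / π k, fun j hj => sub_eq_zero.1 ?_⟩
  refine hS.eq_zero_of_invariant hP (u := fun j => v j - v k / π k * π j)
    (fun i hi => ?_) (fun i hi => ?_) hk ?_ j hj
  · exact sub_nonneg.2 ((le_div_iff₀ (hπpos i hi)).1 (hmin i hi))
  · simp only [mul_sub, Finset.sum_sub_distrib, mul_left_comm _ (v k / π k), ← Finset.mul_sum]
    rw [← hv i hi, ← hπ i hi]
  · simp [div_mul_cancel₀ _ (hπpos k hk).ne']

/-- If two equilibria differ somewhere on an irreducible stochastic block, then neither is
saturated on that block. -/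
theorem IsEquil.eq_sum_add_of_ne (hP : ∀ i j, 0 ≤ P i j) (hsub : ∀ i, ∑ j, P i j ≤ 1)
    (hw : 0 ≤ w) (hS : IrredTrapSet P S) (hstoc : ∀ i ∈ S, ∑ j ∈ S, P i j = 1)
    (hx : IsEquil P w c x) (hy : IsEquil P w c y) (hne : ∃ j ∈ S, x j ≠ y j) :
    ∀ j ∈ S, x j = ∑ i, P i j * x i + c j := by
  intro j hj
  have hinv : ∀ j ∈ S, |x j - y j| = ∑ i ∈ S, P i j * |x i - y i| := fun j hj => by
    rw [hx.abs_sub_eq hP hsub hy j, ← Finset.sum_add_sum_compl S,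
      Finset.sum_eq_zero (s := Sᶜ) fun i hi => hx.mul_abs_sub_eq_zero hP hsub hstoc hy hi hj,
      add_zero]
  have hxy : x j ≠ y j := fun h => by
    obtain ⟨k, hk, hxk⟩ := hne
    have := hS.eq_zero_of_invariant hP (fun _ _ => abs_nonneg _) hinv hj (by simp [h]) k hk
    exact hxk (sub_eq_zero.1 (abs_eq_zero.1 this))
  have hle := (abs_sum_mul_sub_sum_mul_le (c := c) hP j).trans_eq
    (hx.abs_sub_eq hP hsub hy j).symm
  conv_rhs at hle => rw [hx.apply j, hy.apply j]
  refine (hx.apply j).trans (clamp_eq_self_of_abs_sub_le (hw j) (fun h => hxy ?_) hle)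
  rw [hx.apply j, hy.apply j, h]

theorem IsEquil.nonneg (hw : 0 ≤ w) (hx : IsEquil P w c x) (j : Fin n) : 0 ≤ x j := by
  rw [hx.apply j]
  exact le_min (le_max_right _ _) (hw j)

theorem IsEquil.le (hx : IsEquil P w c x) (j : Fin n) : x j ≤ w j := by
  rw [hx.apply j]
  exact min_le_right _ _

/-- Replacing an equilibrium on a trapping set by an unsaturated solution of the flow balance on
that set gives an equilibrium. -/
theorem IsEquil.piecewise (hS : TrapSet P S) (hx : IsEquil P w c x) {z : Fin n → ℝ}
    (hz : ∀ j ∈ S, z j = ∑ i ∈ S, P i j * z i + (c j + ∑ i ∈ Sᶜ, P i j * x i))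
    (hz0 : ∀ j ∈ S, 0 ≤ z j) (hzw : ∀ j ∈ S, z j ≤ w j) :
    IsEquil P w c (S.piecewise z x) := by
  refine isEquil_of_apply fun j => ?_
  have hsum : ∑ i, P i j * S.piecewise z x i =
      ∑ i ∈ S, P i j * z i + ∑ i ∈ Sᶜ, P i j * x i := by
    rw [← Finset.sum_add_sum_compl S]
    congr 1 <;> refine Finset.sum_congr rfl fun i hi => ?_
    · rw [Finset.piecewise_eq_of_mem _ _ _ hi]
    · rw [Finset.piecewise_eq_of_notMem _ _ _ (Finset.mem_compl.1 hi)]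
  rw [hsum]
  by_cases hj : j ∈ S
  · have h : ∑ i ∈ S, P i j * z i + ∑ i ∈ Sᶜ, P i j * x i + c j = z j := by
      rw [hz j hj]; ring
    rw [Finset.piecewise_eq_of_mem _ _ _ hj, h, max_eq_left (hz0 j hj), min_eq_left (hzw j hj)]
  · rw [Finset.piecewise_eq_of_notMem _ _ _ hj, hx.apply j, ← Finset.sum_add_sum_compl S,
      Finset.sum_congr rfl fun i hi => show P i j * x i = P i j * z i by
        rw [hS.2 i hi j hj, zero_mul, zero_mul]]

end Network

/-- on an irreducible trapping set `S` with stochastic block and zero total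
incoming exogenous flow `d`, non-uniqueness of the restriction of the equilibria to `S`
holds iff `min_{i∈S} (νᵢ/πᵢ) + min_{i∈S} ((wᵢ − νᵢ)/πᵢ) > 0`; moreover, in that case,
the restriction of every equilibrium to `S` is of the form `ν + α π` with
`−min_{i∈S} (νᵢ/πᵢ) ≤ α ≤ min_{i∈S} ((wᵢ − νᵢ)/πᵢ)`. -/
theorem nonuniqueness_on_trapping_set
    {n : ℕ} (hn : 1 ≤ n) (P : Matrix (Fin n) (Fin n) ℝ)
    (hP : ∀ i j, 0 ≤ P i j) (hsub : ∀ i, ∑ j, P i j ≤ 1)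
    (w : Fin n → ℝ) (hw : 0 ≤ w) (c : Fin n → ℝ)
    (S : Finset (Fin n)) (hS : IrredTrapSet P S)
    (hstoc : ∀ i ∈ S, ∑ j ∈ S, P i j = 1)
    (x : Fin n → ℝ) (hx : IsEquil P w c x)
    (d : Fin n → ℝ) (hd : ∀ j ∈ S, d j = c j + ∑ i ∈ Sᶜ, P i j * x i)
    (hdsum : ∑ j ∈ S, d j = 0)
    (π : Fin n → ℝ) (hπ1 : ∀ j ∈ S, π j = ∑ i ∈ S, P i j * π i)
    (hπ2 : ∑ j ∈ S, π j = 1) (hπ3 : ∀ j ∈ S, 0 < π j)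
    (ν : Fin n → ℝ) (hν : ∀ j ∈ S, ν j = (∑ i ∈ S, P i j * ν i) + d j) :
    ((∃ x' y' : Fin n → ℝ, IsEquil P w c x' ∧ IsEquil P w c y' ∧ ∃ j ∈ S, x' j ≠ y' j) ↔
      0 < S.inf' hS.1.1 (fun i => ν i / π i) +
        S.inf' hS.1.1 (fun i => (w i - ν i) / π i)) ∧
    (0 < S.inf' hS.1.1 (fun i => ν i / π i) +
        S.inf' hS.1.1 (fun i => (w i - ν i) / π i) →
      ∀ y : Fin n → ℝ, IsEquil P w c y → ∃ α : ℝ,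
        -(S.inf' hS.1.1 fun i => ν i / π i) ≤ α ∧
        α ≤ S.inf' hS.1.1 (fun i => (w i - ν i) / π i) ∧
        ∀ j ∈ S, y j = ν j + α * π j) := by
  have hlin : ∀ x' y' : Fin n → ℝ, IsEquil P w c x' → IsEquil P w c y' →
      (∃ j ∈ S, x' j ≠ y' j) → ∃ α : ℝ,
        -(S.inf' hS.1.1 fun i => ν i / π i) ≤ α ∧
        α ≤ S.inf' hS.1.1 (fun i => (w i - ν i) / π i) ∧
        ∀ j ∈ S, x' j = ν j + α * π j := by
    intro x' y' hx' hy' hne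
    obtain ⟨α, hα⟩ := hS.exists_eq_mul_of_invariant hP (v := fun j => x' j - ν j) hπ1 hπ3
      fun j hj => by
        have h1 := hx'.eq_sum_add_of_ne hP hsub hw hS hstoc hy' hne j hj
        rw [← Finset.sum_add_sum_compl S, hx'.sum_compl_eq hP hsub hstoc hx hj] at h1
        have h2 := hν j hj
        rw [hd j hj] at h2
        simp only [mul_sub, Finset.sum_sub_distrib]
        linarith
    have hform : ∀ j ∈ S, x' j = ν j + α * π j := fun j hj => by linarith [hα j hj]
    refine ⟨α, ?_, ?_, hform⟩
    · rw [neg_le]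
      refine Finset.le_inf' _ _ fun i hi => ?_
      rw [le_div_iff₀ (hπ3 i hi)]
      linarith [hform i hi, hx'.nonneg hw i]
    · refine Finset.le_inf' _ _ fun i hi => ?_
      rw [le_div_iff₀ (hπ3 i hi)]
      linarith [hform i hi, hx'.le i]
  have hequil : ∀ α : ℝ, -(S.inf' hS.1.1 fun i => ν i / π i) ≤ α →
      α ≤ S.inf' hS.1.1 (fun i => (w i - ν i) / π i) →
      IsEquil P w c (S.piecewise (fun j => ν j + α * π j) x) := by
    intro α hα1 hα2
    refine hx.piecewise hS.1 (fun j hj => ?_) (fun j hj => ?_) fun j hj => ?_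
    · simp only [mul_add, Finset.sum_add_distrib, mul_left_comm, ← Finset.mul_sum]
      rw [← hπ1 j hj, ← hd j hj]
      linarith [hν j hj]
    · have h := (neg_le.1 hα1).trans (Finset.inf'_le (fun i => ν i / π i) hj)
      rw [le_div_iff₀ (hπ3 j hj)] at h
      linarith
    · have h := hα2.trans (Finset.inf'_le (fun i => (w i - ν i) / π i) hj)
      rw [le_div_iff₀ (hπ3 j hj)] at h
      linarith
  set m := S.inf' hS.1.1 fun i => ν i / π i
  set M := S.inf' hS.1.1 fun i => (w i - ν i) / π i
  obtain ⟨k, hk⟩ := hS.1.1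
  have hsep : 0 < m + M → ν k + -m * π k ≠ ν k + M * π k := fun hpos h => by
    have := mul_right_cancel₀ (hπ3 k hk).ne' (add_left_cancel h)
    linarith
  refine ⟨⟨?_, fun hpos => ?_⟩, fun hpos y hy => ?_⟩
  · rintro ⟨x', y', hx', hy', j, hj, hne⟩
    obtain ⟨α, hα1, hα2, hα⟩ := hlin x' y' hx' hy' ⟨j, hj, hne⟩
    obtain ⟨β, hβ1, hβ2, hβ⟩ := hlin y' x' hy' hx' ⟨j, hj, hne.symm⟩
    have hαβ : α ≠ β := fun h => hne (by rw [hα j hj, hβ j hj, h])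
    rcases lt_or_gt_of_ne hαβ with h | h <;> linarith
  · refine ⟨_, _, hequil (-m) le_rfl (by linarith), hequil M (by linarith) le_rfl, k, hk, ?_⟩
    simpa only [Finset.piecewise_eq_of_mem _ _ _ hk] using hsep hpos
  · by_cases h : y k = ν k + -m * π k
    · refine hlin y _ hy (hequil M (by linarith) le_rfl) ⟨k, hk, ?_⟩
      rw [Finset.piecewise_eq_of_mem _ _ _ hk, h]
      exact hsep hpos
    · refine hlin y _ hy (hequil (-m) le_rfl (by linarith)) ⟨k, hk, ?_⟩
      rwa [Finset.piecewise_eq_of_mem _ _ _ hk]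
end
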